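/- Let b ≥ 2 and x ∈ [0,1). Then x is normal in base b if and only if dim_FS^b(x) = 1, i.e., inf_T liminf_{δ→0} K^T_δ(x)/log_b(1/δ) = 1 where the infimum is over all Σ_b-FSTs. -/

import Mathlib

open Filter Set
open scoped ENNReal

/-- A finite-state transducer over alphabet `A`, with states `Fin n`. -/
structure FST (A : Type) where
  n : ℕ
  tr : Fin n → A → Fin n
  out1 : Fin n → A → List A
  q0 : Fin n

/-- Extension of the transition function to strings. -/
def FST.deltaS {A : Type} (T : FST A) : Fin T.n → List A → Fin T.n
  | q, [] => q
  | q, a :: w => T.deltaS (T.tr q a) w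

/-- Extension of the output function to strings. -/
def FST.nuS {A : Type} (T : FST A) : Fin T.n → List A → List A
  | _, [] => []
  | q, a :: w => T.out1 q a ++ T.nuS (T.tr q a) w

/-- The output of `T` on input `w`. -/
def FST.out {A : Type} (T : FST A) (w : List A) : List A := T.nuS T.q0 w

/-- `T`-information content of a string: shortest input producing it (`⊤` if none). -/
noncomputable def Kfst {A : Type} (T : FST A) (w : List A) : ℕ∞ :=
  sInf {k : ℕ∞ | ∃ π : List A, T.out π = w ∧ (π.length : ℕ∞) = k}

/-- The real number in `[0,1)` with finite base-`b` expansion `w`. -/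
noncomputable def realb (b : ℕ) (w : List (Fin b)) : ℝ :=
  ∑ i : Fin w.length, (w.get i : ℝ) / (b : ℝ) ^ (i.1 + 1)

/-- The real number with base-`b` expansion `S`. -/
noncomputable def realSeq (b : ℕ) (S : ℕ → Fin b) : ℝ :=
  ∑' i : ℕ, (S i : ℝ) / (b : ℝ) ^ (i + 1)

/-- The length-`n` prefix of a sequence, as a string. -/
def pre {A : Type} (S : ℕ → A) (n : ℕ) : List A := List.ofFn (fun i : Fin n => S i.1)

/-- Base-`b` `T`-information content of `x` at precision `δ`. -/
noncomputable def Kprec (b : ℕ) (T : FST (Fin b)) (δ : ℝ) (x : ℝ) : ℕ∞ :=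
  sInf {k : ℕ∞ | ∃ w : List (Fin b), |realb b w - x| < δ ∧ Kfst T w = k}

/-- Base-`b` finite-state dimension of a point of `[0,1)`. -/
noncomputable def dimFSb (b : ℕ) (x : ℝ) : ℝ≥0∞ :=
  ⨅ T : FST (Fin b),
    Filter.liminf (fun δ : ℝ =>
      (Kprec b T δ x : ℝ≥0∞) / ENNReal.ofReal (Real.logb b (1/δ)))
      (nhdsWithin 0 (Set.Ioi 0))

/-- Base-`b` finite-state dimension of a subset of `[0,1)`. -/
noncomputable def dimFSbSet (b : ℕ) (A : Set ℝ) : ℝ≥0∞ :=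
  ⨅ T : FST (Fin b), ⨆ x ∈ A,
    Filter.liminf (fun δ : ℝ =>
      (Kprec b T δ x : ℝ≥0∞) / ENNReal.ofReal (Real.logb b (1/δ)))
      (nhdsWithin 0 (Set.Ioi 0))

/-- Finite-state dimension of a sequence (Doty–Moser characterization). -/
noncomputable def dimFSseq {A : Type} (S : ℕ → A) : ℝ≥0∞ :=
  ⨅ T : FST A,
    Filter.liminf (fun n : ℕ => (Kfst T (pre S n) : ℝ≥0∞) / (n : ℝ≥0∞)) Filter.atTop

/-- Finite-state dimension of a set of sequences. -/
noncomputable def dimFSseqSet {A : Type} (X : Set (ℕ → A)) : ℝ≥0∞ :=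
  ⨅ T : FST A, ⨆ S ∈ X,
    Filter.liminf (fun n : ℕ => (Kfst T (pre S n) : ℝ≥0∞) / (n : ℝ≥0∞)) Filter.atTop

/-- digit complement of a sequence -/
def compSeq (b : ℕ) (S : ℕ → Fin b) : ℕ → Fin b :=
  fun i => ⟨b - 1 - (S i : ℕ), by have := (S i).isLt; omega⟩

/-- `S` ends with infinitely many digits `b-1`. -/
def endsBm1 (b : ℕ) (S : ℕ → Fin b) : Prop := ∃ N, ∀ i ≥ N, (S i : ℕ) = b - 1

/-- A separator enumerator: a map into `[0,1)` with dense image in `[0,1]`. -/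
def isSE {A : Type} (f : List A → ℝ) : Prop :=
  (∀ w, f w ∈ Set.Ico (0:ℝ) 1) ∧ ∀ y ∈ Set.Icc (0:ℝ) 1, y ∈ closure (Set.range f)

/-- `f`-`T`-information content of `x` at precision `δ`. -/
noncomputable def KprecF {A : Type} (T : FST A) (f : List A → ℝ) (δ : ℝ) (x : ℝ) : ℕ∞ :=
  sInf {k : ℕ∞ | ∃ w : List A, |f w - x| < δ ∧ Kfst T w = k}

/-- `f`-enumerator finite-state dimension of a point. -/
noncomputable def dimFSf {A : Type} [Fintype A] (f : List A → ℝ) (x : ℝ) : ℝ≥0∞ :=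
  ⨅ T : FST A,
    Filter.liminf (fun δ : ℝ =>
      (KprecF T f δ x : ℝ≥0∞) / ENNReal.ofReal (Real.logb (Fintype.card A) (1/δ)))
      (nhdsWithin 0 (Set.Ioi 0))

/-- `f`-enumerator finite-state dimension of a set. -/
noncomputable def dimFSfSet {A : Type} [Fintype A] (f : List A → ℝ) (E : Set ℝ) : ℝ≥0∞ :=
  ⨅ T : FST A, ⨆ x ∈ E,
    Filter.liminf (fun δ : ℝ =>
      (KprecF T f δ x : ℝ≥0∞) / ENNReal.ofReal (Real.logb (Fintype.card A) (1/δ)))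
      (nhdsWithin 0 (Set.Ioi 0))

open scoped Classical in
/-- Number of occurrences of `w` among the first `N` positions of `S`. -/
noncomputable def occCount {b : ℕ} (S : ℕ → Fin b) (w : List (Fin b)) (N : ℕ) : ℕ :=
  (Finset.range N).filter (fun i => ∀ j : Fin w.length, S (i + j.1) = w.get j) |>.card

/-!
Suppose first that `S` is normal, and let `T` output a good approximation of `realSeq b S` on
input `π`. That output shares a prefix with `S`, which can be short only if `S` continues with a
long run of the digit `0` or `b - 1`; normality makes such runs negligible. Cut the shared prefix
into overlapping windows of length `l`: reading at most `r < l` letters, `T` can emit only about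
`b ^ r` of the `b ^ l` possible windows, so by normality almost every window costs more than `r`
letters, and `π` is almost as long as the prefix.

If `S` is not normal, some `v` of length `l` occurs with the wrong frequency along infinitely many
prefixes of `S`. In long blocks of digits the count of `v` deviates substantially from its mean in
only a small proportion of all blocks, because occurrences of `v` at distance at least `l` are
uncorrelated. Hence `S` has a positive proportion of blocks from a set small enough to be named with
`g` digits fewer than the block length. A prefix code with a flag digit per block, decoded by a
finite-state transducer, then saves a positive proportion of the input.
-/

section

open scoped Finset Topology

/-! ### Approximation of real numbers by digit strings -/

section DigitExpansions

variable {A : Type} {b : ℕ}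

lemma pre_zero (S : ℕ → A) : pre S 0 = [] := List.ofFn_zero

lemma pre_succ (S : ℕ → A) (n : ℕ) : pre S (n + 1) = S 0 :: pre (fun i => S (i + 1)) n := by
  simp [pre, List.ofFn_succ]

lemma length_pre (S : ℕ → A) (n : ℕ) : (pre S n).length = n := List.length_ofFn

lemma getElem_pre (S : ℕ → A) {n i : ℕ} (hi : i < (pre S n).length) : (pre S n)[i] = S i :=
  List.getElem_ofFn hi

lemma pre_prefix_pre (S : ℕ → A) {m n : ℕ} (h : m ≤ n) : pre S m <+: pre S n :=
  List.prefix_iff_eq_take.2 <| List.ext_getElem (by simp [length_pre, h]) fun i _ _ => by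
    simp [getElem_pre]

lemma realSeq_eq_ofDigits (S : ℕ → Fin b) : realSeq b S = Real.ofDigits S := by
  simp only [realSeq, Real.ofDigits, Real.ofDigitsTerm, div_eq_mul_inv]

lemma realSeq_nonneg (S : ℕ → Fin b) : 0 ≤ realSeq b S :=
  realSeq_eq_ofDigits S ▸ Real.ofDigits_nonneg S

lemma realSeq_eq_head_add_tail_div (S : ℕ → Fin b) :
    realSeq b S = (S 0 + realSeq b (fun i => S (i + 1))) / b := by
  simp only [realSeq_eq_ofDigits]
  rw [Real.ofDigits_eq_sum_add_ofDigits S 1]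
  simp only [Finset.sum_range_one, Real.ofDigitsTerm, zero_add, pow_one]
  ring

lemma realb_nil : realb b [] = 0 := by simp [realb]

lemma realb_cons (a : Fin b) (w : List (Fin b)) : realb b (a :: w) = (a + realb b w) / b := by
  simp [realb, Fin.sum_univ_succ, add_div, Finset.sum_div, pow_succ, div_div]

lemma realb_nonneg (w : List (Fin b)) : 0 ≤ realb b w :=
  Finset.sum_nonneg fun _ _ => by positivity

lemma realb_le_one (w : List (Fin b)) : realb b w ≤ 1 := by
  induction w with
  | nil => simp [realb_nil]
  | cons a w ih =>
    have ha : (a : ℝ) + 1 ≤ b := mod_cast a.isLt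
    rw [realb_cons, div_le_one (mod_cast a.pos)]
    linarith

lemma digit_eq_zero_of_realSeq_lt {S : ℕ → Fin b} {n : ℕ} (h : realSeq b S < (b : ℝ)⁻¹ ^ n)
    {i : ℕ} (hi : i < n) : (S i : ℕ) = 0 := by
  by_contra h0
  have hb : (1 : ℝ) ≤ b := mod_cast (S 0).pos
  have h1 : (1 : ℝ) ≤ S i := mod_cast Nat.one_le_iff_ne_zero.2 h0
  refine h.not_ge ?_
  calc (b : ℝ)⁻¹ ^ n ≤ (b : ℝ)⁻¹ ^ (i + 1) :=
        pow_le_pow_of_le_one (by positivity) (inv_le_one_of_one_le₀ hb) hi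
    _ ≤ S i * ((b : ℝ) ^ (i + 1))⁻¹ := by
        rw [inv_pow]; exact le_mul_of_one_le_left (by positivity) h1
    _ ≤ realSeq b S := realSeq_eq_ofDigits S ▸
        Real.summable_ofDigitsTerm.le_tsum i fun _ _ => Real.ofDigitsTerm_nonneg

lemma realSeq_compSeq (hb : 2 ≤ b) (S : ℕ → Fin b) :
    realSeq b (compSeq b S) = 1 - realSeq b S := by
  rw [eq_sub_iff_add_eq, realSeq_eq_ofDigits, realSeq_eq_ofDigits, Real.ofDigits, Real.ofDigits,
    ← Real.summable_ofDigitsTerm.tsum_add Real.summable_ofDigitsTerm,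
    ← Real.ofDigits_const_last_eq_one' hb, Real.ofDigits]
  refine tsum_congr fun i => ?_
  have hi : (compSeq b S i : ℕ) + S i = b - 1 :=
    Nat.sub_add_cancel (Nat.le_sub_one_of_lt (S i).2)
  simp only [Real.ofDigitsTerm, ← add_mul, ← hi, Nat.cast_add]

lemma digit_eq_pred_of_one_sub_realSeq_lt (hb : 2 ≤ b) {S : ℕ → Fin b} {n : ℕ}
    (h : 1 - realSeq b S < (b : ℝ)⁻¹ ^ n) {i : ℕ} (hi : i < n) : (S i : ℕ) = b - 1 := by
  rw [← realSeq_compSeq hb] at h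
  have h0 : b - 1 - (S i : ℕ) = 0 := digit_eq_zero_of_realSeq_lt h hi
  have := (S i).isLt
  omega

lemma realb_pre_eq_sum (S : ℕ → Fin b) (n : ℕ) :
    realb b (pre S n) = ∑ i ∈ Finset.range n, Real.ofDigitsTerm S i := by
  rw [Finset.sum_range]
  refine Fintype.sum_equiv (finCongr (length_pre S n)) _ _ fun i => ?_
  rw [List.get_eq_getElem, getElem_pre, Real.ofDigitsTerm, div_eq_mul_inv, finCongr_apply_coe]

lemma abs_realb_pre_sub_realSeq_le (S : ℕ → Fin b) (n : ℕ) :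
    |realb b (pre S n) - realSeq b S| ≤ (b : ℝ)⁻¹ ^ n := by
  rw [realb_pre_eq_sum, realSeq_eq_ofDigits, Real.ofDigits_eq_sum_add_ofDigits S n,
    sub_add_cancel_left, abs_neg,
    abs_of_nonneg (mul_nonneg (by positivity) (Real.ofDigits_nonneg _)), inv_pow]
  exact mul_le_of_le_one_right (by positivity) (Real.ofDigits_le_one _)

/- Where a good approximation first leaves `S`, the two differ there by one and `S` must continue
with a run of the digit `0` or `b - 1` up to the given precision. -/
lemma exists_prefix_of_abs_realb_sub_realSeq_lt (hb : 2 ≤ b) (w : List (Fin b)) {S : ℕ → Fin b}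
    {n : ℕ} (h : |realb b w - realSeq b S| < (b : ℝ)⁻¹ ^ n) :
    ∃ L, pre S L <+: w ∧ ∃ d, ∀ i ∈ Set.Ioo L n, S i = d := by
  have hb0 : (0 : ℝ) < b := by positivity
  induction w generalizing S n with
  | nil =>
    rw [realb_nil, zero_sub, abs_neg, abs_of_nonneg (realSeq_nonneg S)] at h
    exact ⟨0, by simp [pre_zero], ⟨0, by omega⟩,
      fun i hi => Fin.ext (digit_eq_zero_of_realSeq_lt h hi.2)⟩
  | cons a w ih =>
    obtain _ | n := n
    · exact ⟨0, by simp [pre_zero], a, by simp⟩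
    have hw := realb_nonneg w
    have hw' := realb_le_one w
    rw [realb_cons, realSeq_eq_head_add_tail_div, ← sub_div, abs_div, abs_of_pos hb0, pow_succ,
      ← div_eq_mul_inv, div_lt_div_iff_of_pos_right hb0] at h
    have run_of_tail {d : Fin b} (hd : ∀ i < n, S (i + 1) = d) :
        ∃ L, pre S L <+: a :: w ∧ ∃ d, ∀ i ∈ Set.Ioo L (n + 1), S i = d := by
      refine ⟨0, by simp [pre_zero], d, fun i hi => ?_⟩
      obtain ⟨j, rfl⟩ := Nat.exists_eq_add_one_of_ne_zero hi.1.ne'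
      exact hd j (by simpa using hi.2)
    rcases lt_trichotomy a (S 0) with hlt | rfl | hlt
    · have hlt : (a : ℝ) + 1 ≤ S 0 := mod_cast hlt
      exact run_of_tail (d := ⟨0, by omega⟩) fun i hi =>
        Fin.ext (digit_eq_zero_of_realSeq_lt (S := fun i => S (i + 1))
          (by linarith [(abs_lt.1 h).1]) hi)
    · rw [add_sub_add_left_eq_sub] at h
      obtain ⟨L, hL, d, hd⟩ := ih h
      refine ⟨L + 1, by simpa [pre_succ] using hL, d, fun i hi => ?_⟩
      obtain ⟨j, rfl⟩ := Nat.exists_eq_add_one_of_ne_zero (Nat.ne_zero_of_lt hi.1)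
      exact hd j (by simpa using hi)
    · have hlt : (S 0 : ℝ) + 1 ≤ a := mod_cast hlt
      exact run_of_tail (d := ⟨b - 1, by omega⟩) fun i hi =>
        Fin.ext (digit_eq_pred_of_one_sub_realSeq_lt hb (S := fun i => S (i + 1))
          (by linarith [(abs_lt.1 h).2]) hi)

end DigitExpansions

section Frequencies

variable {A : Type} {b : ℕ}

/-- Normality in base `b` of a digit sequence: every nonempty string `w` occurs with frequency
`b ^ (-|w|)`. -/
def IsNormal (S : ℕ → Fin b) : Prop :=
  ∀ w : List (Fin b), w ≠ [] →
    Tendsto (fun N : ℕ => (occCount S w N : ℝ) / N) atTop (𝓝 (1 / (b : ℝ) ^ w.length))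

/-- The `l` consecutive terms of `S` that start at position `i`. -/
def window (S : ℕ → A) (i l : ℕ) : Fin l → A := fun k => S (i + k)

lemma occCount_ofFn (S : ℕ → Fin b) {l : ℕ} (v : Fin l → Fin b) (N : ℕ) :
    occCount S (List.ofFn v) N = Nat.count (window S · l = v) N := by
  simp [occCount, Nat.count_eq_card_filter_range, funext_iff, window, Fin.forall_iff]

lemma count_mem_eq_sum_count {W : Type*} [DecidableEq W] (f : ℕ → W) (B : Finset W) (N : ℕ) :
    Nat.count (f · ∈ B) N = ∑ v ∈ B, Nat.count (f · = v) N := by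
  simp only [Nat.count_eq_card_filter_range]
  rw [Finset.card_eq_sum_card_fiberwise (s := {i ∈ Finset.range N | f i ∈ B}) (t := B)
    fun i hi => (Finset.mem_filter.1 hi).2]
  refine Finset.sum_congr rfl fun v hv => ?_
  rw [Finset.filter_filter]
  congr! 3 with i
  exact and_iff_right_of_imp fun h => h ▸ hv

lemma IsNormal.tendsto_count_window_eq_div {S : ℕ → Fin b} (hS : IsNormal S) {l : ℕ} (hl : 0 < l)
    (v : Fin l → Fin b) :
    Tendsto (fun N : ℕ => (Nat.count (window S · l = v) N : ℝ) / N) atTop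
      (𝓝 (1 / (b : ℝ) ^ l)) := by
  simpa only [occCount_ofFn, List.length_ofFn] using
    hS (List.ofFn v) (mt List.ofFn_eq_nil_iff.1 hl.ne')

lemma IsNormal.tendsto_count_window_mem_div {S : ℕ → Fin b} (hS : IsNormal S) {l : ℕ} (hl : 0 < l)
    (B : Finset (Fin l → Fin b)) :
    Tendsto (fun N : ℕ => (Nat.count (window S · l ∈ B) N : ℝ) / N) atTop
      (𝓝 (#B / (b : ℝ) ^ l)) := by
  have h := tendsto_finsetSum B fun v _ => hS.tendsto_count_window_eq_div hl v
  simp only [Finset.sum_const, nsmul_eq_mul, mul_one_div] at h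
  simpa only [count_mem_eq_sum_count, Nat.cast_sum, Finset.sum_div] using h

lemma exists_abs_sub_mul_le_of_tendsto_div {f : ℕ → ℝ} {c κ : ℝ}
    (h : Tendsto (fun N : ℕ => f N / N) atTop (𝓝 c)) (hκ : 0 < κ) :
    ∃ C, ∀ N : ℕ, |f N - c * N| ≤ κ * N + C := by
  have bounded : ∀ᶠ N : ℕ in atTop, |f N - c * N| - κ * N ≤ 0 := by
    filter_upwards [Metric.tendsto_nhds.1 h κ hκ, eventually_gt_atTop 0] with N hN hN0
    have hN0 : (0 : ℝ) < N := mod_cast hN0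
    rw [Real.dist_eq, ← mul_lt_mul_iff_left₀ hN0, ← abs_of_pos hN0, ← abs_mul, abs_of_pos hN0,
      sub_mul, div_mul_cancel₀ _ hN0.ne'] at hN
    linarith
  obtain ⟨C, hC⟩ := (Filter.isBoundedUnder_of_eventually_le bounded).bddAbove_range
  exact ⟨C, fun N => by linarith [hC ⟨N, rfl⟩]⟩

lemma exists_run_le_of_tendsto_count_div {p : ℕ → Prop} [DecidablePred p] {θ κ : ℝ} (hθ : θ < 1)
    (h : Tendsto (fun N : ℕ => (Nat.count p N : ℝ) / N) atTop (𝓝 θ)) (hκ : 0 < κ) :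
    ∃ C : ℝ, ∀ L n : ℕ, (∀ i ∈ Set.Ioo L n, p i) → n ≤ L + κ * n + C := by
  have hθ' : 0 < 1 - θ := sub_pos.2 hθ
  obtain ⟨C, hC⟩ := exists_abs_sub_mul_le_of_tendsto_div h (κ := κ * (1 - θ) / 2) (by positivity)
  have hC0 : 0 ≤ C := by simpa using hC 0
  refine ⟨1 + 2 * C / (1 - θ), fun L n hrun => ?_⟩
  rcases le_or_gt n L with hle | hlt
  · have : (n : ℝ) ≤ L := mod_cast hle
    have : 0 ≤ κ * n + 2 * C / (1 - θ) := by positivity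
    linarith
  obtain ⟨k, rfl⟩ := Nat.exists_eq_add_of_le (Nat.succ_le_of_lt hlt)
  have count_run : Nat.count p (L + 1 + k) = Nat.count p (L + 1) + k := by
    rw [Nat.count_add, Nat.add_left_cancel_iff, Nat.count_iff_forall]
    exact fun i hi => hrun _ ⟨by omega, by omega⟩
  have upper := (abs_le.1 (hC (L + 1 + k))).2
  have lower := (abs_le.1 (hC (L + 1))).1
  rw [count_run] at upper
  push_cast at upper lower ⊢
  have hk : (1 - θ) * k ≤ κ * (1 - θ) * (L + 1 + k) + 2 * C := by
    nlinarith [mul_nonneg (mul_pos hκ hθ').le k.cast_nonneg]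
  have hk' : (k : ℝ) ≤ κ * (L + 1 + k) + 2 * C / (1 - θ) := by
    rw [← mul_le_mul_iff_right₀ hθ', mul_add, mul_div_cancel₀ _ hθ'.ne']
    linarith
  linarith

lemma IsNormal.exists_run_le (hb : 2 ≤ b) {S : ℕ → Fin b} (hS : IsNormal S) {κ : ℝ} (hκ : 0 < κ) :
    ∃ C : ℝ, ∀ L n d, (∀ i ∈ Set.Ioo L n, S i = d) → n ≤ L + κ * n + C := by
  have run_le (d : Fin b) : ∃ C : ℝ, ∀ L n, (∀ i ∈ Set.Ioo L n, S i = d) → n ≤ L + κ * n + C := by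
    have hθ : 1 / (b : ℝ) < 1 := by
      rw [div_lt_one (by positivity)]
      exact_mod_cast hb
    have freq := hS.tendsto_count_window_eq_div one_pos fun _ => d
    simp only [window, funext_iff, Fin.forall_fin_one, Fin.val_zero, add_zero, pow_one] at freq
    exact exists_run_le_of_tendsto_count_div hθ freq hκ
  choose C hC using run_le
  obtain ⟨M, hM⟩ := (Set.finite_range C).bddAbove
  exact ⟨M, fun L n d h => (hC d L n h).trans (by linarith [hM ⟨d, rfl⟩])⟩

end Frequencies

/-! ### Lower bounds on the input length of a transducer -/

section CompressionBounds

variable {A : Type}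

namespace FST

variable (T : FST A)

lemma nuS_append (q : Fin T.n) (u v : List A) :
    T.nuS q (u ++ v) = T.nuS q u ++ T.nuS (T.deltaS q u) v := by
  induction u generalizing q with
  | nil => rfl
  | cons a u ih => simp only [List.cons_append, nuS, deltaS, ih, List.append_assoc]

lemma out_append (u v : List A) : T.out (u ++ v) = T.out u ++ T.nuS (T.deltaS T.q0 u) v :=
  T.nuS_append T.q0 u v

lemma out_take_add (π : List A) (t s : ℕ) :
    T.out (π.take (t + s)) =
      T.out (π.take t) ++ T.nuS (T.deltaS T.q0 (π.take t)) ((π.drop t).take s) := by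
  rw [List.take_add, out_append]

lemma out_take_prefix (π : List A) (t : ℕ) : T.out (π.take t) <+: T.out π := by
  conv_rhs => rw [← List.take_append_drop t π, out_append]
  exact List.prefix_append _ _

lemma exists_length_out1_le [Finite A] : ∃ C, ∀ q a, (T.out1 q a).length ≤ C := by
  obtain ⟨C, hC⟩ := (Set.finite_range fun p : Fin T.n × A => (T.out1 p.1 p.2).length).bddAbove
  exact ⟨C, fun q a => hC ⟨(q, a), rfl⟩⟩

/-- The number of letters of the input `π` that `T` has read when its output first reaches
length `i`. The value is `0` if the output never gets that long. -/
noncomputable def inputTime (π : List A) (i : ℕ) : ℕ :=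
  sInf {t | i ≤ (T.out (π.take t)).length}

variable {T} {C : ℕ} {π : List A} {i j : ℕ}

lemma le_length_out_take_inputTime (hi : i ≤ (T.out π).length) :
    i ≤ (T.out (π.take (T.inputTime π i))).length :=
  Nat.sInf_mem (s := {t | i ≤ (T.out (π.take t)).length})
    ⟨π.length, by simpa using hi⟩

lemma inputTime_le_length (hi : i ≤ (T.out π).length) : T.inputTime π i ≤ π.length :=
  Nat.sInf_le (by simpa using hi)

lemma inputTime_mono (hij : i ≤ j) (hj : j ≤ (T.out π).length) :
    T.inputTime π i ≤ T.inputTime π j :=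
  Nat.sInf_le (hij.trans (le_length_out_take_inputTime hj))

lemma length_out_take_inputTime_le (hC : ∀ q a, (T.out1 q a).length ≤ C) (π : List A) (i : ℕ) :
    (T.out (π.take (T.inputTime π i))).length ≤ i + C := by
  rcases h : T.inputTime π i with _ | t
  · simp [out, nuS]
  have hlt : (T.out (π.take t)).length < i :=
    not_le.1 (Nat.notMem_of_lt_sInf (s := {t | i ≤ (T.out (π.take t)).length})
      (by rw [inputTime] at h; omega))
  have hstep : (T.nuS (T.deltaS T.q0 (π.take t)) ((π.drop t).take 1)).length ≤ C := by
    rcases π.drop t with _ | ⟨a, _⟩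
    · simp [nuS]
    · simpa [nuS] using hC _ a
  rw [out_take_add, List.length_append]
  omega

variable (T) in
/-- The strings of length `l` that `T` can emit while reading at most `r` letters, apart from at
most `C` initial letters that are already pending. -/
noncomputable def cheapWords [Finite A] (C r l : ℕ) : Finset (Fin l → A) :=
  (Set.toFinite {w : Fin l → A | ∃ c q s, c.length ≤ C ∧ s.length ≤ r ∧
    List.ofFn w <+: c ++ T.nuS q s}).toFinset

lemma window_mem_cheapWords [Finite A] {S : ℕ → A} {r l : ℕ}
    (hC : ∀ q a, (T.out1 q a).length ≤ C) (hpre : pre S (i + l) <+: T.out π)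
    (hr : T.inputTime π (i + l) ≤ T.inputTime π i + r) :
    window S i l ∈ T.cheapWords C r l := by
  have hlen : i + l ≤ (T.out π).length := length_pre S (i + l) ▸ hpre.length_le
  obtain ⟨s, hs⟩ := Nat.exists_eq_add_of_le (inputTime_mono (Nat.le_add_right i l) hlen)
  have hout := T.out_take_add π (T.inputTime π i) s
  rw [← hs] at hout
  have hpre' : pre S (i + l) <+: T.out (π.take (T.inputTime π (i + l))) :=
    List.prefix_of_prefix_length_le hpre (T.out_take_prefix π _)
      (by simpa only [length_pre] using le_length_out_take_inputTime hlen)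
  have hwindow : (pre S (i + l)).drop i = List.ofFn (window S i l) :=
    List.ext_getElem (by simp [length_pre]) fun k h₁ h₂ => by simp [getElem_pre, window]
  have hi : i ≤ (T.out (π.take (T.inputTime π i))).length :=
    le_length_out_take_inputTime (by omega)
  have hdrop := hpre'.drop i
  rw [hout, List.drop_append_of_le_length hi, hwindow] at hdrop
  refine (Set.Finite.mem_toFinset _).2 ⟨_, _, _, ?_, ?_, hdrop⟩
  · have := length_out_take_inputTime_le hC π i
    rw [List.length_drop]
    omega
  · exact (List.length_take_le _ _).trans (by omega)

end FST

lemma sum_range_shift_le {σ : ℕ → ℕ} {k M l : ℕ} (h : ∀ i ≤ M + l, σ i ≤ k) :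
    ∑ i ∈ Finset.range M, σ (i + l) ≤ ∑ i ∈ Finset.range M, σ i + l * k := by
  have htail : ∑ i ∈ Finset.range l, σ (M + i) ≤ l * k := by
    simpa using Finset.sum_le_card_nsmul (Finset.range l) (fun i => σ (M + i)) k
      fun i hi => h _ (by have := Finset.mem_range.1 hi; omega)
  have hsplit := Finset.sum_range_add σ l M
  rw [add_comm l M, Finset.sum_range_add] at hsplit
  simp only [add_comm l] at hsplit
  omega

/- Every window outside `cheapWords` costs more than `r` input letters, and each input letter is
charged by at most `l` windows. -/
lemma FST.mul_le_length_add_count_cheapWords [Finite A] [DecidableEq A] {T : FST A} {C : ℕ}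
    (hC : ∀ q a, (T.out1 q a).length ≤ C) {S : ℕ → A} {π : List A} {M l : ℕ} (r : ℕ)
    (hpre : pre S (M + l) <+: T.out π) :
    r * M ≤ l * π.length + r * Nat.count (fun i => window S i l ∈ T.cheapWords C r l) M := by
  have hlen : M + l ≤ (T.out π).length := length_pre S (M + l) ▸ hpre.length_le
  have htime (i : ℕ) (hi : i < M) : T.inputTime π i + r ≤ T.inputTime π (i + l) +
      r * if window S i l ∈ T.cheapWords C r l then 1 else 0 := by
    have hmono := T.inputTime_mono (π := π) (Nat.le_add_right i l) (by omega)
    split_ifs with hcheap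
    · omega
    · contrapose! hcheap
      refine T.window_mem_cheapWords hC ((pre_prefix_pre S (by omega)).trans hpre) (by omega)
  have hsum := Finset.sum_le_sum fun i hi => htime i (Finset.mem_range.1 hi)
  simp only [Finset.sum_add_distrib, ← Finset.mul_sum, Finset.sum_boole, Finset.sum_const,
    Finset.card_range, smul_eq_mul] at hsum
  have htel := sum_range_shift_le (σ := T.inputTime π) (k := π.length) (M := M) (l := l)
    fun i hi => T.inputTime_le_length (by omega)
  rw [Nat.count_eq_card_filter_range]
  push_cast at hsum
  linarith

instance finite_list_length_le [Finite A] (n : ℕ) : Finite {l : List A // l.length ≤ n} :=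
  (List.finite_length_le A n).to_subtype

lemma card_list_length_le [Fintype A] (hA : 2 ≤ Fintype.card A) (n : ℕ) :
    Nat.card {l : List A // l.length ≤ n} ≤ Fintype.card A ^ (n + 1) := by
  let ofSigma (p : Σ i : Fin (n + 1), Fin i → A) : {l : List A // l.length ≤ n} :=
    ⟨List.ofFn p.2, by simpa using p.1.is_le⟩
  have hsurj : Function.Surjective ofSigma := fun l =>
    ⟨⟨⟨l.1.length, Nat.lt_succ_of_le l.2⟩, l.1.get⟩, Subtype.ext (List.ofFn_get l.1)⟩
  refine (Nat.card_le_card_of_surjective ofSigma hsurj).trans ?_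
  rw [Nat.card_eq_fintype_card, Fintype.card_sigma]
  simp only [Fintype.card_pi_const]
  rw [Fin.sum_univ_eq_sum_range (fun i => Fintype.card A ^ i)]
  exact (Nat.geomSum_lt hA fun i hi => Finset.mem_range.1 hi).le

lemma FST.card_cheapWords_le [Fintype A] (hA : 2 ≤ Fintype.card A) (T : FST A) (C r l : ℕ) :
    #(T.cheapWords C r l) ≤ T.n * Fintype.card A ^ (C + r + 2) := by
  have (n : ℕ) := Fintype.ofFinite {l : List A // l.length ≤ n}
  have hdata := Finset.card_le_card_of_forall_subsingleton
    (s := T.cheapWords C r l)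
    (t := (Finset.univ : Finset ({c : List A // c.length ≤ C} × Fin T.n ×
      {s : List A // s.length ≤ r})))
    (fun w p => List.ofFn w <+: p.1.1 ++ T.nuS p.2.1 p.2.2.1)
    (fun w hw => by
      obtain ⟨c, q, s, hc, hs, h⟩ := (Set.Finite.mem_toFinset _).1 hw
      exact ⟨(⟨c, hc⟩, q, ⟨s, hs⟩), Finset.mem_univ _, h⟩)
    (fun p _ v hv w hw => List.ofFn_injective
      ((List.prefix_of_prefix_length_le hv.2 hw.2 (by simp)).eq_of_length (by simp)))
  rw [Finset.card_univ, Fintype.card_prod, Fintype.card_prod, Fintype.card_fin,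
    ← Nat.card_eq_fintype_card, ← Nat.card_eq_fintype_card] at hdata
  calc #(T.cheapWords C r l)
      ≤ Nat.card {c : List A // c.length ≤ C} * (T.n * Nat.card {s : List A // s.length ≤ r}) :=
        hdata
    _ ≤ Fintype.card A ^ (C + 1) * (T.n * Fintype.card A ^ (r + 1)) := by
        gcongr <;> exact card_list_length_le hA _
    _ = T.n * Fintype.card A ^ (C + r + 2) := by ring

lemma FST.exists_sparse_cheapWords [Fintype A] (hA : 2 ≤ Fintype.card A) (T : FST A) (C : ℕ)
    {ε : ℝ} (hε : 0 < ε) :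
    ∃ r l : ℕ, 0 < l ∧ r ≤ l ∧ (1 - ε) * l ≤ r ∧
      #(T.cheapWords C r l) ≤ ε * (Fintype.card A : ℝ) ^ l := by
  set k := Fintype.card A
  have hk : (1 : ℝ) < k := mod_cast hA
  obtain ⟨g, hg⟩ := pow_unbounded_of_one_lt (T.n * (k : ℝ) ^ (C + 2) / ε) hk
  obtain ⟨r, hr⟩ := exists_nat_gt (g / ε)
  rw [div_lt_iff₀' hε] at hg hr
  have hr0 : 0 < r := by
    have : (0 : ℝ) < r := pos_of_mul_pos_right (g.cast_nonneg.trans_lt hr) hε.le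
    exact_mod_cast this
  refine ⟨r, r + g, by omega, by omega, ?_, ?_⟩
  · push_cast
    nlinarith [mul_nonneg hε.le g.cast_nonneg]
  · calc (#(T.cheapWords C r (r + g)) : ℝ)
        ≤ T.n * (k : ℝ) ^ (C + r + 2) := mod_cast T.card_cheapWords_le hA C r (r + g)
      _ = T.n * (k : ℝ) ^ (C + 2) * (k : ℝ) ^ r := by ring
      _ ≤ ε * (k : ℝ) ^ g * (k : ℝ) ^ r := by gcongr
      _ = ε * (k : ℝ) ^ (r + g) := by ring

variable {b : ℕ} {S : ℕ → Fin b} {ρ : ℝ}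

lemma IsNormal.exists_mul_le_length_of_prefix (hb : 2 ≤ b) (hS : IsNormal S) (T : FST (Fin b))
    (hρ : ρ < 1) :
    ∃ D : ℝ, ∀ (L : ℕ) π, pre S L <+: T.out π → ρ * L ≤ π.length + D := by
  obtain ⟨C, hC⟩ := T.exists_length_out1_le
  have hε : 0 < (1 - ρ) / 3 := by linarith
  obtain ⟨r, l, hl, hrl, hr, hcard⟩ := T.exists_sparse_cheapWords (by simpa using hb) C hε
  rw [Fintype.card_fin] at hcard
  obtain ⟨E, hE⟩ := exists_abs_sub_mul_le_of_tendsto_div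
    (hS.tendsto_count_window_mem_div hl (T.cheapWords C r l)) hε
  have hE0 : 0 ≤ E := by simpa using hE 0
  have hfreq : #(T.cheapWords C r l) / (b : ℝ) ^ l ≤ (1 - ρ) / 3 :=
    div_le_of_le_mul₀ (by positivity) hε.le hcard
  refine ⟨E + l, fun L π hpre => ?_⟩
  rcases lt_or_ge L l with hLl | hlL
  · have hLl : (L : ℝ) ≤ l := mod_cast hLl.le
    have : (0 : ℝ) ≤ π.length := by positivity
    nlinarith [mul_nonneg (sub_nonneg.2 hρ.le) L.cast_nonneg]
  obtain ⟨M, rfl⟩ := Nat.exists_eq_add_of_le' hlL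
  have hcheap := (abs_le.1 (hE M)).2
  have hcharge := T.mul_le_length_add_count_cheapWords hC r hpre
  generalize Nat.count (fun i => window S i l ∈ T.cheapWords C r l) M = cheap at hcheap hcharge
  rify at hcharge
  replace hcheap : cheap - E ≤ 2 * ((1 - ρ) / 3) * M := by
    nlinarith [mul_le_mul_of_nonneg_right hfreq M.cast_nonneg]
  have hl' : (0 : ℝ) < l := mod_cast hl
  have hrl' : (r : ℝ) ≤ l := mod_cast hrl
  have hM : ρ * M ≤ π.length + E := by
    refine le_of_mul_le_mul_left ?_ hl'
    calc l * (ρ * M) = (1 - (1 - ρ) / 3) * l * M - l * (2 * ((1 - ρ) / 3) * M) := by ring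
      _ ≤ r * M - l * (cheap - E) := by gcongr
      _ ≤ l * π.length + r * cheap - l * (cheap - E) := by gcongr
      _ ≤ l * π.length + l * cheap - l * (cheap - E) := by gcongr
      _ = l * (π.length + E) := by ring
  push_cast
  nlinarith

lemma IsNormal.exists_mul_le_length_of_abs_lt (hb : 2 ≤ b) (hS : IsNormal S) (T : FST (Fin b))
    (hρ : ρ < 1) :
    ∃ D : ℝ, ∀ (n : ℕ) π, |realb b (T.out π) - realSeq b S| < (b : ℝ)⁻¹ ^ n →
      ρ * n ≤ π.length + D := by
  obtain ⟨D, hD⟩ := hS.exists_mul_le_length_of_prefix hb T (ρ := (1 + ρ) / 2) (by linarith)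
  obtain ⟨C, hC⟩ := hS.exists_run_le hb (κ := (1 - ρ) / 2) (by linarith)
  refine ⟨D + C, fun n π h => ?_⟩
  obtain ⟨L, hL, d, hd⟩ := exists_prefix_of_abs_realb_sub_realSeq_lt hb _ h
  have hcost := hD (min L n) π ((pre_prefix_pre S (min_le_left L n)).trans hL)
  have hrun := hC (min L n) n d fun i hi => hd i (by grind)
  have hmin : ((min L n : ℕ) : ℝ) ≤ n := mod_cast min_le_right L n
  nlinarith

end CompressionBounds

section InformationDensity

variable {b : ℕ} {T : FST (Fin b)} {x δ c ρ D : ℝ}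

/-- The lower density of `T`-information in the approximations of `x`: the quantity whose infimum
over `T` is `dimFSb b x`. -/
noncomputable def infoDensity (b : ℕ) (T : FST (Fin b)) (x : ℝ) : ℝ≥0∞ :=
  liminf (fun δ : ℝ => (Kprec b T δ x : ℝ≥0∞) / ENNReal.ofReal (Real.logb b (1 / δ))) (𝓝[>] 0)

lemma dimFSb_le_infoDensity (T : FST (Fin b)) (x : ℝ) : dimFSb b x ≤ infoDensity b T x :=
  iInf_le _ T

lemma le_dimFSb {d : ℝ≥0∞} (h : ∀ T, d ≤ infoDensity b T x) : d ≤ dimFSb b x := le_iInf h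

lemma ofReal_le_Kprec (h : ∀ π, |realb b (T.out π) - x| < δ → c ≤ (π.length : ℝ)) :
    ENNReal.ofReal c ≤ Kprec b T δ x := by
  have hceil : (⌈c⌉₊ : ℕ∞) ≤ Kprec b T δ x := by
    refine le_sInf ?_
    rintro _ ⟨_, hw, rfl⟩
    refine le_sInf ?_
    rintro _ ⟨π, rfl, rfl⟩
    exact_mod_cast Nat.ceil_le.2 (h π hw)
  calc ENNReal.ofReal c ≤ ENNReal.ofReal ⌈c⌉₊ := ENNReal.ofReal_le_ofReal (Nat.le_ceil c)
    _ = ((⌈c⌉₊ : ℕ∞) : ℝ≥0∞) := by rw [ENNReal.ofReal_natCast, ENat.toENNReal_coe]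
    _ ≤ Kprec b T δ x := ENat.toENNReal_le.2 hceil

lemma Kprec_le_length {π : List (Fin b)} (h : |realb b (T.out π) - x| < δ) :
    Kprec b T δ x ≤ π.length :=
  (sInf_le ⟨T.out π, h, rfl⟩ : Kprec b T δ x ≤ Kfst T (T.out π)).trans (sInf_le ⟨π, rfl, rfl⟩)

lemma tendsto_logb_one_div_nhdsGT_zero (hb : 2 ≤ b) :
    Tendsto (fun δ : ℝ => Real.logb b (1 / δ)) (𝓝[>] 0) atTop := by
  simpa only [one_div, Function.comp_def] using
    (Real.tendsto_logb_atTop (b := b) (mod_cast hb)).comp tendsto_inv_nhdsGT_zero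

lemma le_inv_pow_floor_logb (hb : 2 ≤ b) (hδ : 0 < δ) (hlog : 0 ≤ Real.logb b (1 / δ)) :
    δ ≤ (b : ℝ)⁻¹ ^ ⌊Real.logb b (1 / δ)⌋₊ := by
  have hb1 : (1 : ℝ) < b := mod_cast hb
  rw [inv_pow, le_inv_comm₀ hδ (by positivity), ← one_div]
  calc (b : ℝ) ^ ⌊Real.logb b (1 / δ)⌋₊
      ≤ (b : ℝ) ^ Real.logb b (1 / δ) := by
        rw [← Real.rpow_natCast]
        exact Real.rpow_le_rpow_of_exponent_le hb1.le (Nat.floor_le hlog)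
    _ = 1 / δ := Real.rpow_logb (by linarith) hb1.ne' (by positivity)

lemma ofReal_le_infoDensity (hb : 2 ≤ b)
    (h : ∀ (n : ℕ) π, |realb b (T.out π) - x| < (b : ℝ)⁻¹ ^ n → ρ * n ≤ π.length + D) :
    ENNReal.ofReal ρ ≤ infoDensity b T x := by
  have hlog := tendsto_logb_one_div_nhdsGT_zero hb
  have hlim : Tendsto (fun δ : ℝ => ENNReal.ofReal (ρ - (|ρ| + D) / Real.logb b (1 / δ)))
      (𝓝[>] 0) (𝓝 (ENNReal.ofReal ρ)) := by
    simpa only [sub_zero] using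
      ENNReal.tendsto_ofReal ((hlog.const_div_atTop (|ρ| + D)).const_sub ρ)
  rw [← hlim.liminf_eq]
  refine liminf_le_liminf ?_
  filter_upwards [hlog.eventually_gt_atTop 0, self_mem_nhdsWithin] with δ hlog_pos hδ
  set y := Real.logb b (1 / δ)
  rw [ENNReal.le_div_iff_mul_le (by simp [hlog_pos]) (by simp), ← ENNReal.ofReal_mul' hlog_pos.le]
  refine ofReal_le_Kprec fun π hπ => ?_
  have hfloor := h ⌊y⌋₊ π (hπ.trans_le (le_inv_pow_floor_logb hb hδ hlog_pos.le))
  have hround : ρ * (y - ⌊y⌋₊) ≤ |ρ| := by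
    refine (mul_le_mul_of_nonneg_right (le_abs_self ρ) ?_).trans
      (mul_le_of_le_one_right (abs_nonneg ρ) ?_)
    · exact sub_nonneg.2 (Nat.floor_le hlog_pos.le)
    · linarith [Nat.lt_floor_add_one y]
  rw [sub_mul, div_mul_cancel₀ _ hlog_pos.ne']
  linarith

lemma infoDensity_le_ofReal (hb : 2 ≤ b)
    (h : ∃ᶠ n : ℕ in atTop, ∃ π, |realb b (T.out π) - x| ≤ (b : ℝ)⁻¹ ^ n ∧ π.length ≤ c * n) :
    infoDensity b T x ≤ ENNReal.ofReal c := by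
  have hb1 : (1 : ℝ) < b := mod_cast hb
  -- One digit of precision is given up to make the approximations strict.
  have hδ : Tendsto (fun n : ℕ => (b : ℝ) * (b : ℝ)⁻¹ ^ n) atTop (𝓝[>] 0) := by
    refine tendsto_nhdsWithin_iff.2
      ⟨?_, Eventually.of_forall fun n => Set.mem_Ioi.2 (by positivity)⟩
    simpa using (tendsto_pow_atTop_nhds_zero_of_lt_one (by positivity)
      (inv_lt_one_of_one_lt₀ hb1)).const_mul (b : ℝ)
  have hlog (n : ℕ) : Real.logb b (1 / (b * (b : ℝ)⁻¹ ^ n)) = n - 1 := by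
    rw [one_div, Real.logb_inv, Real.logb_mul (by positivity) (by positivity), Real.logb_pow,
      Real.logb_inv, Real.logb_self_eq_one hb1]
    ring
  have hlim : Tendsto (fun n : ℕ => c / ((n : ℝ) - 1)) atTop (𝓝 0) :=
    (tendsto_atTop_add_const_right _ _ tendsto_natCast_atTop_atTop).const_div_atTop c
  refine ENNReal.le_of_forall_pos_le_add fun ε hε _ => ?_
  refine liminf_le_of_frequently_le (hδ.frequently ?_)
  refine (h.and_eventually ((hlim.eventually_le_const (NNReal.coe_pos.2 hε)).and
    (eventually_gt_atTop 1))).mono ?_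
  rintro n ⟨⟨π, hπ, hlen⟩, hn, hn1⟩
  have hn1 : (0 : ℝ) < n - 1 := sub_pos.2 (mod_cast hn1)
  have hstrict : (b : ℝ)⁻¹ ^ n < b * (b : ℝ)⁻¹ ^ n := lt_mul_of_one_lt_left (by positivity) hb1
  rw [hlog]
  refine ENNReal.div_le_of_le_mul ?_
  calc (Kprec b T (b * (b : ℝ)⁻¹ ^ n) x : ℝ≥0∞)
      ≤ ((π.length : ℕ∞) : ℝ≥0∞) := ENat.toENNReal_le.2 (Kprec_le_length (hπ.trans_lt hstrict))
    _ = ENNReal.ofReal π.length := by rw [ENat.toENNReal_coe, ENNReal.ofReal_natCast]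
    _ ≤ ENNReal.ofReal ((c + ε) * (n - 1)) := by
        rw [div_le_iff₀ hn1] at hn
        exact ENNReal.ofReal_le_ofReal (by linarith)
    _ = ENNReal.ofReal (c + ε) * ENNReal.ofReal (n - 1) := ENNReal.ofReal_mul' hn1.le
    _ ≤ (ENNReal.ofReal c + ε) * ENNReal.ofReal (n - 1) := by
        gcongr
        exact ENNReal.ofReal_add_le.trans_eq (by rw [ENNReal.ofReal_coe_nnreal])

/-- The identity transducer. -/
def idFST (A : Type) : FST A where
  n := 1
  tr q _ := q
  out1 _ a := [a]
  q0 := 0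

lemma out_idFST {A : Type} (w : List A) : (idFST A).out w = w := by
  have nuS_idFST (q) : (idFST A).nuS q w = w := by
    induction w generalizing q with
    | nil => rfl
    | cons a w ih => exact congrArg (a :: ·) (ih _)
  exact nuS_idFST _

lemma dimFSb_realSeq_le_one (hb : 2 ≤ b) (S : ℕ → Fin b) : dimFSb b (realSeq b S) ≤ 1 := by
  refine (dimFSb_le_infoDensity (idFST (Fin b)) _).trans ?_
  rw [← ENNReal.ofReal_one]
  refine infoDensity_le_ofReal hb (Eventually.of_forall fun n => ?_).frequently
  exact ⟨pre S n, by simpa only [out_idFST] using abs_realb_pre_sub_realSeq_le S n,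
    by simp [length_pre]⟩

theorem IsNormal.dimFSb_eq_one (hb : 2 ≤ b) {S : ℕ → Fin b} (hS : IsNormal S) :
    dimFSb b (realSeq b S) = 1 := by
  refine le_antisymm (dimFSb_realSeq_le_one hb S) (le_dimFSb fun T => ?_)
  refine ENNReal.le_of_forall_nnreal_lt fun ρ hρ => ?_
  obtain ⟨D, hD⟩ := hS.exists_mul_le_length_of_abs_lt hb T (ρ := ρ) (mod_cast hρ)
  rw [← ENNReal.ofReal_coe_nnreal]
  exact ofReal_le_infoDensity hb hD

end InformationDensity

/-! ### Coding blocks from a small set -/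

section Decoding

variable {A U : Type}

/-- The transducer with states in a finite type `σ`, transition function `tr`, output function
`out1` and initial state `q0`. -/
noncomputable def FST.ofFinite {σ : Type} [Finite σ] (tr : σ → A → σ) (out1 : σ → A → List A)
    (q0 : σ) : FST A where
  n := Nat.card σ
  tr q a := Finite.equivFin σ (tr ((Finite.equivFin σ).symm q) a)
  out1 q a := out1 ((Finite.equivFin σ).symm q) a
  q0 := Finite.equivFin σ q0

lemma FST.nuS_ofFinite_cons {σ : Type} [Finite σ] (tr : σ → A → σ) (out1 : σ → A → List A)
    (q0 q : σ) (a : A) (w : List A) :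
    (FST.ofFinite tr out1 q0).nuS (Finite.equivFin σ q) (a :: w) =
      out1 q a ++ (FST.ofFinite tr out1 q0).nuS (Finite.equivFin σ (tr q a)) w := by
  simp only [nuS, ofFinite, Equiv.symm_apply_apply]

variable [Finite A]

/-- The transducer that decodes a prefix code `c` whose code words have length at most `N`: the
state buffers the part of the current code word read so far, and `o u` is emitted when the buffer
becomes `c u`. -/
noncomputable def prefixDecoder (c o : U → List A) (N : ℕ) : FST A :=
  .ofFinite (σ := {l : List A // l.length ≤ N})
    (fun l a => (Function.partialInv c (l.1 ++ [a])).elim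
      ⟨(l.1 ++ [a]).take N, List.length_take_le N _⟩ fun _ => ⟨[], N.zero_le⟩)
    (fun l a => (Function.partialInv c (l.1 ++ [a])).elim [] o)
    ⟨[], N.zero_le⟩

variable {c : U → List A} (o : U → List A) {N : ℕ}

lemma nuS_prefixDecoder_code (hN : ∀ u, (c u).length ≤ N)
    (hprefix : ∀ u u', c u <+: c u' → u = u') {u : U} (l : {l : List A // l.length ≤ N})
    {s : List A} (hs : s ≠ []) (hu : l.1 ++ s = c u) (w : List A) :
    (prefixDecoder c o N).nuS (Finite.equivFin _ l) (s ++ w) =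
      o u ++ (prefixDecoder c o N).out w := by
  have hinj : Function.Injective c := fun u u' h => hprefix u u' (by rw [h])
  have partialInv_eq_some := hinj.isPartialInv
  induction s generalizing l with
  | nil => exact absurd rfl hs
  | cons a s ih =>
    refine (FST.nuS_ofFinite_cons _ _ _ l a _).trans ?_
    rcases eq_or_ne s [] with rfl | hs'
    · rw [(partialInv_eq_some u _).2 hu.symm]
      rfl
    have hinv : Function.partialInv c (l.1 ++ [a]) = none := by
      refine Option.eq_none_iff_forall_ne_some.2 fun u' hu' => hs' ?_
      have hcode := (partialInv_eq_some u' _).1 hu'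
      have hsplit : c u' ++ s = c u := by rw [hcode, ← hu, List.append_assoc, List.singleton_append]
      obtain rfl := hprefix u' u ⟨s, hsplit⟩
      exact List.append_right_eq_self.1 hsplit
    have hle : (l.1 ++ [a]).length ≤ N := by
      have := hN u
      rw [← hu, List.length_append, List.length_cons] at this
      rw [List.length_append, List.length_singleton]
      omega
    rw [hinv]
    simp only [Option.elim_none, List.nil_append, List.take_of_length_le hle]
    exact ih ⟨l.1 ++ [a], hle⟩ hs' (by simpa using hu)

lemma exists_out_flatMap_eq_flatMap [Finite U] (hne : ∀ u, c u ≠ [])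
    (hprefix : ∀ u u', c u <+: c u' → u = u') :
    ∃ T : FST A, ∀ us : List U, T.out (us.flatMap c) = us.flatMap o := by
  obtain ⟨N, hN⟩ := (Set.finite_range fun u => (c u).length).bddAbove
  refine ⟨prefixDecoder c o N, fun us => ?_⟩
  induction us with
  | nil => rfl
  | cons u us ih =>
    rw [List.flatMap_cons, List.flatMap_cons, ← ih]
    exact nuS_prefixDecoder_code o (fun u => hN ⟨u, rfl⟩) hprefix ⟨[], N.zero_le⟩ (hne u)
      (List.nil_append _) _

end Decoding

section BlockCompression

/- Members of `G` are coded by a flag followed by a name of length `r`, other blocks by a different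
flag followed by the block itself. -/
lemma exists_decoder_of_card_le {A : Type} [Fintype A] [Nontrivial A] {m r : ℕ}
    {G : Finset (Fin m → A)} (hG : #G ≤ Fintype.card A ^ r) :
    ∃ (T : FST A) (c : (Fin m → A) → List A),
      (∀ us : List (Fin m → A), T.out (us.flatMap c) = us.flatMap List.ofFn) ∧
      (∀ u ∈ G, (c u).length = r + 1) ∧ ∀ u ∉ G, (c u).length = m + 1 := by
  classical
  obtain ⟨inside, outside, hflag⟩ := exists_pair_ne A
  obtain ⟨name⟩ : Nonempty (G ↪ (Fin r → A)) :=
    Function.Embedding.nonempty_of_card_le (by simpa using hG)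
  let c (u : Fin m → A) : List A :=
    if h : u ∈ G then inside :: List.ofFn (name ⟨u, h⟩) else outside :: List.ofFn u
  have hprefix (u u') (h : c u <+: c u') : u = u' := by
    by_cases hu : u ∈ G <;> by_cases hu' : u' ∈ G <;>
      simp only [c, hu, hu', dite_true, dite_false, List.cons_prefix_cons, hflag, hflag.symm,
        true_and, false_and] at h
    · have := name.injective (List.ofFn_injective (h.eq_of_length (by simp)))
      exact congrArg Subtype.val this
    · exact List.ofFn_injective (h.eq_of_length (by simp))
  obtain ⟨T, hT⟩ := exists_out_flatMap_eq_flatMap List.ofFn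
    (fun u => by simp only [c]; split_ifs <;> exact List.cons_ne_nil _ _) hprefix
  exact ⟨T, c, hT, fun u hu => by simp [c, hu], fun u hu => by simp [c, hu]⟩

variable {b : ℕ} {S : ℕ → Fin b} {m g : ℕ} {G : Finset (Fin m → Fin b)}

lemma pre_mul_eq_flatMap_window {A : Type} (S : ℕ → A) (J m : ℕ) :
    pre S (J * m) = (List.ofFn fun j : Fin J => window S (j * m) m).flatMap List.ofFn := by
  rw [pre, List.ofFn_mul, List.flatMap, List.map_ofFn]
  rfl

lemma exists_length_add_mul_count_eq (hb : 2 ≤ b) (hG : #G ≤ b ^ (m - g)) (hgm : g ≤ m)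
    (S : ℕ → Fin b) :
    ∃ T : FST (Fin b), ∀ J : ℕ, ∃ π, T.out π = pre S (J * m) ∧
      π.length + g * Nat.count (fun j => window S (j * m) m ∈ G) J = J * (m + 1) := by
  have : Nontrivial (Fin b) := Fin.nontrivial_iff_two_le.2 hb
  obtain ⟨T, c, hT, hmem, hnotMem⟩ :=
    exists_decoder_of_card_le (G := G) (r := m - g) (by simpa using hG)
  have hcost (u : Fin m → Fin b) : (c u).length + g * (if u ∈ G then 1 else 0) = m + 1 := by
    split_ifs with hu
    · rw [hmem u hu]; omega
    · rw [hnotMem u hu, mul_zero, add_zero]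
  refine ⟨T, fun J => ⟨_, (hT _).trans (pre_mul_eq_flatMap_window S J m).symm, ?_⟩⟩
  rw [List.length_flatMap, List.map_ofFn, List.sum_ofFn, Nat.count_eq_card_filter_range,
    Finset.card_filter, Finset.sum_range, Finset.mul_sum, ← Finset.sum_add_distrib]
  simp only [Function.comp_apply, hcost, Finset.sum_const, Finset.card_univ, Fintype.card_fin,
    smul_eq_mul]

theorem dimFSb_lt_one_of_frequently_le_count (hb : 2 ≤ b) (hG : #G ≤ b ^ (m - g)) (hgm : g ≤ m)
    {η : ℝ} (hη : 1 < η * g)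
    (hfreq : ∃ᶠ J : ℕ in atTop, η * J ≤ Nat.count (fun j => window S (j * m) m ∈ G) J) :
    dimFSb b (realSeq b S) < 1 := by
  obtain ⟨T, hT⟩ := exists_length_add_mul_count_eq hb hG hgm S
  have hm : 0 < m := by
    refine Nat.pos_of_ne_zero fun hm => ?_
    obtain rfl : g = 0 := by omega
    norm_num at hη
  have hm' : (0 : ℝ) < m := mod_cast hm
  have hdensity : infoDensity b T (realSeq b S) ≤ ENNReal.ofReal ((m + 1 - η * g) / m) := by
    refine infoDensity_le_ofReal hb ((tendsto_id.atTop_mul_const' hm).frequently ?_)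
    refine hfreq.mono fun J hJ => ?_
    obtain ⟨π, hπ, hlen⟩ := hT J
    refine ⟨π, hπ ▸ abs_realb_pre_sub_realSeq_le S (J * m), ?_⟩
    rify at hlen
    rw [id, Nat.cast_mul, mul_comm (J : ℝ), ← mul_assoc, div_mul_cancel₀ _ hm'.ne']
    nlinarith [mul_le_mul_of_nonneg_left hJ g.cast_nonneg]
  refine (dimFSb_le_infoDensity T _).trans_lt (hdensity.trans_lt ?_)
  rw [ENNReal.ofReal_lt_one, div_lt_one hm']
  linarith

end BlockCompression

/-! ### Deviations of block frequencies -/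

section SecondMoment

variable {A W : Type*}

lemma sum_comp_mul_comp_eq_zero {ι κ κ' : Type*} [Fintype A] [Fintype ι] [Fintype κ]
    [DecidableEq ι] [DecidableEq κ] {f : κ → ι} {f' : κ' → ι} (hf : Function.Injective f)
    (hdisj : ∀ k k', f' k' ≠ f k) {φ : (κ → A) → ℝ} (hφ : ∑ w, φ w = 0) (ψ : (κ' → A) → ℝ) :
    ∑ u : ι → A, φ (u ∘ f) * ψ (u ∘ f') = 0 := by
  classical
  have hf' (k') : f' k' ∉ Set.range f := fun ⟨k, hk⟩ => hdisj k k' hk.symm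
  calc ∑ u : ι → A, φ (u ∘ f) * ψ (u ∘ f')
      = ∑ p : ({i // i ∈ Set.range f} → A) × ({i // i ∉ Set.range f} → A),
          φ (p.1 ∘ Set.rangeFactorization f) * ψ fun k' => p.2 ⟨f' k', hf' k'⟩ :=
        Fintype.sum_equiv (Equiv.piEquivPiSubtypeProd (· ∈ Set.range f) fun _ => A) _ _
          fun _ => rfl
    _ = (∑ y : {i // i ∈ Set.range f} → A, φ (y ∘ Set.rangeFactorization f)) *
          ∑ z : {i // i ∉ Set.range f} → A, ψ fun k' => z ⟨f' k', hf' k'⟩ := by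
        rw [Fintype.sum_prod_type, Finset.sum_mul_sum]
    _ = (∑ w, φ w) * ∑ z : {i // i ∉ Set.range f} → A, ψ fun k' => z ⟨f' k', hf' k'⟩ := by
        congr 1
        exact Fintype.sum_equiv ((Equiv.ofInjective f hf).symm.arrowCongr (Equiv.refl A)) _ _
          fun _ => rfl
    _ = 0 := by rw [hφ, zero_mul]

lemma card_fin_near_le (K l i : ℕ) : #{j : Fin K | i < j + l ∧ j < i + l} ≤ 2 * l := by
  have hsub := Finset.card_le_card_of_injOn (Fin.val : Fin K → ℕ)
    (s := {j : Fin K | i < j + l ∧ j < i + l}) (t := Finset.Ico (i + 1 - l) (i + l))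
    (fun j hj => by
      simp only [Finset.coe_filter, Finset.mem_univ, true_and, Set.mem_ofPred_eq] at hj
      simp only [Finset.coe_Ico, Set.mem_Ico]
      omega)
    Fin.val_injective.injOn
  rw [Nat.card_Ico] at hsub
  omega

lemma sum_sq_sum_le_of_orthogonal {Ω : Type*} [Fintype Ω] {K l : ℕ} {X : Fin K → Ω → ℝ}
    (hX : ∀ i u, |X i u| ≤ 1)
    (horth : ∀ i j : Fin K, (i : ℕ) + l ≤ j → ∑ u, X i u * X j u = 0) :
    ∑ u, (∑ i, X i u) ^ 2 ≤ 2 * l * K * Fintype.card Ω := by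
  have hpair (i j : Fin K) : ∑ u, X i u * X j u ≤
      if (i : ℕ) < j + l ∧ (j : ℕ) < i + l then (Fintype.card Ω : ℝ) else 0 := by
    split_ifs with hnear
    · rw [← nsmul_one, ← Finset.card_univ]
      refine Finset.sum_le_card_nsmul _ _ _ fun u _ => (le_abs_self _).trans ?_
      rw [abs_mul]
      exact mul_le_one₀ (hX i u) (abs_nonneg _) (hX j u)
    · rcases le_or_gt ((i : ℕ) + l) j with hij | hij
      · exact (horth i j hij).le
      · simp only [mul_comm (X i _)]
        exact (horth j i (by omega)).le
  calc ∑ u, (∑ i, X i u) ^ 2 = ∑ i, ∑ j, ∑ u, X i u * X j u := by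
        simp only [sq, Finset.sum_mul_sum]
        rw [Finset.sum_comm]
        exact Finset.sum_congr rfl fun i _ => Finset.sum_comm
    _ ≤ ∑ i : Fin K, ∑ j : Fin K,
          if (i : ℕ) < j + l ∧ (j : ℕ) < i + l then (Fintype.card Ω : ℝ) else 0 := by
        gcongr; exact hpair _ _
    _ ≤ ∑ i : Fin K, 2 * l * (Fintype.card Ω : ℝ) := by
        refine Finset.sum_le_sum fun i _ => ?_
        rw [← Finset.sum_filter, Finset.sum_const, nsmul_eq_mul]
        gcongr
        exact_mod_cast card_fin_near_le K l i
    _ = 2 * l * K * Fintype.card Ω := by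
        rw [Finset.sum_const, Finset.card_univ, Fintype.card_fin, nsmul_eq_mul]
        ring

/-- The `l` consecutive entries of the block `u` that start at position `i`. -/
def subwindow {K l : ℕ} (i : Fin K) (u : Fin (K + l) → A) : Fin l → A :=
  u ∘ fun k => ⟨i + k, by omega⟩

variable [Fintype W] [DecidableEq W]

/-- The indicator function of `v`, shifted so that its average over the finite type `W` is `0`. -/
noncomputable def centeredIndicator (v w : W) : ℝ :=
  (if w = v then 1 else 0) - (Fintype.card W : ℝ)⁻¹

lemma sum_centeredIndicator (v : W) : ∑ w, centeredIndicator v w = 0 := by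
  have : Nonempty W := ⟨v⟩
  simp [centeredIndicator]

lemma abs_centeredIndicator_le_one (v w : W) : |centeredIndicator v w| ≤ 1 := by
  have hcard : (1 : ℝ) ≤ Fintype.card W := mod_cast Fintype.card_pos_iff.2 ⟨v⟩
  have hinv := inv_le_one_of_one_le₀ hcard
  have hinv0 : (0 : ℝ) ≤ (Fintype.card W : ℝ)⁻¹ := by positivity
  rw [centeredIndicator, abs_le]
  split_ifs <;> constructor <;> linarith

lemma sum_range_centeredIndicator (f : ℕ → W) (v : W) (N : ℕ) :
    ∑ i ∈ Finset.range N, centeredIndicator v (f i) =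
      Nat.count (f · = v) N - N / Fintype.card W := by
  simp [centeredIndicator, Nat.count_eq_card_filter_range, div_eq_mul_inv]

variable [Fintype A] [DecidableEq A] {K l : ℕ}

lemma sum_centeredIndicator_subwindow_mul_eq_zero (v : Fin l → A) {i j : Fin K}
    (hij : (i : ℕ) + l ≤ j) :
    ∑ u : Fin (K + l) → A,
      centeredIndicator v (subwindow i u) * centeredIndicator v (subwindow j u) = 0 := by
  refine sum_comp_mul_comp_eq_zero (fun k k' h => ?_) (fun k k' h => ?_)
    (sum_centeredIndicator v) (centeredIndicator v) <;>
  · have := congrArg Fin.val h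
    dsimp only at this
    omega

/-- The blocks of length `K + l` in which the number of occurrences of `v` that start at one of the
first `K` positions differs from its mean by at least `t`. -/
noncomputable def deviantBlocks (K : ℕ) (v : Fin l → A) (t : ℝ) : Finset (Fin (K + l) → A) :=
  {u | t ≤ |∑ i : Fin K, centeredIndicator v (subwindow i u)|}

lemma sq_mul_card_deviantBlocks_le (v : Fin l → A) {t : ℝ} (ht : 0 ≤ t) :
    t ^ 2 * #(deviantBlocks K v t) ≤ 2 * l * K * (Fintype.card A : ℝ) ^ (K + l) := by
  let X (i : Fin K) (u : Fin (K + l) → A) : ℝ := centeredIndicator v (subwindow i u)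
  calc t ^ 2 * #(deviantBlocks K v t) = ∑ _u ∈ deviantBlocks K v t, t ^ 2 := by
        rw [Finset.sum_const, nsmul_eq_mul, mul_comm]
    _ ≤ ∑ u ∈ deviantBlocks K v t, (∑ i, X i u) ^ 2 :=
        Finset.sum_le_sum fun _ hu =>
          sq_le_sq.2 ((abs_of_nonneg ht).trans_le (Finset.mem_filter.1 hu).2)
    _ ≤ ∑ u, (∑ i, X i u) ^ 2 :=
        Finset.sum_le_univ_sum_of_nonneg fun _ => sq_nonneg _
    _ ≤ 2 * l * K * Fintype.card (Fin (K + l) → A) :=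
        sum_sq_sum_le_of_orthogonal (fun i u => abs_centeredIndicator_le_one v _)
          fun i j hij => sum_centeredIndicator_subwindow_mul_eq_zero v hij
    _ = 2 * l * K * (Fintype.card A : ℝ) ^ (K + l) := by
        rw [Fintype.card_pi_const, Nat.cast_pow]

lemma eventually_card_deviantBlocks_le (v : Fin l → A) {ε : ℝ} (hε : 0 < ε) (g : ℕ) :
    ∀ᶠ K : ℕ in atTop,
      #(deviantBlocks K v (ε * (K + l : ℕ))) ≤ Fintype.card A ^ (K + l - g) := by
  set k := Fintype.card A
  have hsize : Tendsto (fun K : ℕ => ε ^ 2 * ((K + l : ℕ) : ℝ)) atTop atTop :=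
    (tendsto_natCast_atTop_atTop.comp (tendsto_add_atTop_nat l)).const_mul_atTop (by positivity)
  filter_upwards [hsize.eventually_ge_atTop (2 * l * (k : ℝ) ^ g), eventually_gt_atTop g]
    with K hK hgK
  have hcheb := sq_mul_card_deviantBlocks_le (K := K) v (t := ε * (K + l : ℕ)) (by positivity)
  obtain ⟨s, hs⟩ := Nat.exists_eq_add_of_le (hgK.le.trans (Nat.le_add_right K l))
  have hKm : (K : ℝ) ≤ (K + l : ℕ) := mod_cast Nat.le_add_right K l
  have hm : (0 : ℝ) < (K + l : ℕ) := mod_cast (Nat.zero_le g).trans_lt (hgK.trans_le (by omega))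
  generalize #(deviantBlocks K v _) = c at hcheb ⊢
  generalize K + l = m at *
  subst hs
  rw [Nat.add_sub_cancel_left]
  have hpos : 0 < ε ^ 2 * ((g + s : ℕ) : ℝ) * ((g + s : ℕ) : ℝ) := by positivity
  have hc : (c : ℝ) ≤ k ^ s := by
    refine le_of_mul_le_mul_left ?_ hpos
    calc ε ^ 2 * ((g + s : ℕ) : ℝ) * ((g + s : ℕ) : ℝ) * c
        = (ε * (g + s : ℕ)) ^ 2 * c := by ring
      _ ≤ 2 * l * K * (k : ℝ) ^ (g + s) := hcheb
      _ = 2 * l * (k : ℝ) ^ g * K * (k : ℝ) ^ s := by ring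
      _ ≤ ε ^ 2 * (g + s : ℕ) * (g + s : ℕ) * (k : ℝ) ^ s := by gcongr
  exact_mod_cast hc

end SecondMoment

section NonNormality

lemma abs_sum_range_le {Y : ℕ → ℝ} (hY : ∀ i, |Y i| ≤ 1) (n : ℕ) :
    |∑ i ∈ Finset.range n, Y i| ≤ n := by
  refine (Finset.abs_sum_le_sum_abs _ _).trans ?_
  simpa using Finset.sum_le_card_nsmul (Finset.range n) (|Y ·|) 1 fun i _ => hY i

lemma abs_sum_range_mul_le_count {Y : ℕ → ℝ} (hY : ∀ i, |Y i| ≤ 1) (K l : ℕ) {t : ℝ} (ht : 0 ≤ t)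
    {p : ℕ → Prop} [DecidablePred p]
    (hp : ∀ j, ¬ p j → |∑ i ∈ Finset.range K, Y (j * (K + l) + i)| ≤ t) (J : ℕ) :
    |∑ i ∈ Finset.range (J * (K + l)), Y i| ≤ J * (l + t) + K * Nat.count p J := by
  induction J with
  | zero => simp
  | succ J ih =>
    have hlast := abs_sum_range_le (fun i => hY (J * (K + l) + (K + i))) l
    have hblock : |∑ i ∈ Finset.range K, Y (J * (K + l) + i)| ≤ t + K * if p J then 1 else 0 := by
      split_ifs with hJ
      · linarith [abs_sum_range_le (fun i => hY (J * (K + l) + i)) K]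
      · linarith [hp J hJ]
    rw [add_one_mul, Finset.sum_range_add, Finset.sum_range_add, Nat.count_succ]
    push_cast
    have htriangle := (abs_add_le _ _).trans (add_le_add ih ((abs_add_le _ _).trans
      (add_le_add hblock hlast)))
    linarith

lemma abs_sum_range_le_count {Y : ℕ → ℝ} (hY : ∀ i, |Y i| ≤ 1) {K l : ℕ} (hm : 0 < K + l) {t : ℝ}
    (ht : 0 ≤ t) {p : ℕ → Prop} [DecidablePred p]
    (hp : ∀ j, ¬ p j → |∑ i ∈ Finset.range K, Y (j * (K + l) + i)| ≤ t) (N : ℕ) :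
    |∑ i ∈ Finset.range N, Y i| ≤
      (K + l : ℕ) + (N / (K + l) : ℕ) * (l + t) + K * Nat.count p (N / (K + l)) := by
  have hblocks := abs_sum_range_mul_le_count hY K l ht hp (N / (K + l))
  have htail := abs_sum_range_le (fun i => hY (N / (K + l) * (K + l) + i)) (N % (K + l))
  have hmod : ((N % (K + l) : ℕ) : ℝ) ≤ (K + l : ℕ) := mod_cast (Nat.mod_lt N hm).le
  conv_lhs => rw [← Nat.div_add_mod' N (K + l), Finset.sum_range_add]
  linarith [(abs_add_le _ _).trans (add_le_add hblocks htail)]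

variable {b : ℕ} {S : ℕ → Fin b}

lemma exists_frequently_mul_le_abs_sum_of_not_isNormal (hS : ¬ IsNormal S) :
    ∃ (l : ℕ) (v : Fin l → Fin b) (ε : ℝ), 0 < ε ∧ ∃ᶠ N : ℕ in atTop,
      ε * N ≤ |∑ i ∈ Finset.range N, centeredIndicator v (window S i l)| := by
  simp only [IsNormal, Metric.tendsto_nhds, not_forall, not_eventually, not_lt] at hS
  obtain ⟨w, -, ε, hε, hfreq⟩ := hS
  refine ⟨w.length, w.get, ε, hε, (hfreq.and_eventually (eventually_gt_atTop 0)).mono ?_⟩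
  rintro N ⟨hN, hN0⟩
  have hN0 : (0 : ℝ) < N := mod_cast hN0
  calc ε * N ≤ |occCount S w N / N - 1 / (b : ℝ) ^ w.length| * N := by gcongr; exact hN
    _ = |(occCount S w N / N - 1 / (b : ℝ) ^ w.length) * N| := by rw [abs_mul, abs_of_pos hN0]
    _ = _ := by
      rw [sum_range_centeredIndicator, ← occCount_ofFn, List.ofFn_get, sub_mul,
        div_mul_cancel₀ _ hN0.ne', one_div_mul_eq_div, Fintype.card_pi_const, Fintype.card_fin,
        Nat.cast_pow]

lemma window_mem_deviantBlocks_iff {K l : ℕ} {v : Fin l → Fin b} {t : ℝ} {s : ℕ} :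
    window S s (K + l) ∈ deviantBlocks K v t ↔
      t ≤ |∑ i ∈ Finset.range K, centeredIndicator v (window S (s + i) l)| := by
  have hwindow (i : Fin K) : subwindow i (window S s (K + l)) = window S (s + i) l :=
    funext fun k => congrArg S (add_assoc _ _ _).symm
  simp only [deviantBlocks, Finset.mem_filter, Finset.mem_univ, true_and, hwindow,
    Finset.sum_range]

lemma frequently_mul_le_count_deviantBlocks {l K : ℕ} {v : Fin l → Fin b} {ε : ℝ} (hε : 0 < ε)
    (hm : 0 < K + l) (hl : 4 * l ≤ ε * (K + l : ℕ))
    (hfreq : ∃ᶠ N : ℕ in atTop,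
      ε * N ≤ |∑ i ∈ Finset.range N, centeredIndicator v (window S i l)|) :
    ∃ᶠ J : ℕ in atTop, ε / 8 * J ≤ Nat.count
      (fun j => window S (j * (K + l)) (K + l) ∈ deviantBlocks K v (ε / 2 * (K + l : ℕ))) J := by
  have hdiv := Nat.tendsto_div_const_atTop hm.ne'
  refine hdiv.frequently ((hfreq.and_eventually
    (hdiv.eventually (tendsto_natCast_atTop_atTop.eventually_ge_atTop (8 / ε)))).mono ?_)
  rintro N ⟨hN, hJ⟩
  rw [div_le_iff₀' hε] at hJ
  set deviant : ℕ → Prop := fun j =>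
    window S (j * (K + l)) (K + l) ∈ deviantBlocks K v (ε / 2 * (K + l : ℕ))
  have hblocks := abs_sum_range_le_count (p := deviant)
    (fun i => abs_centeredIndicator_le_one v (window S i l)) hm (by positivity)
    (fun j hj => (lt_of_not_ge (mt window_mem_deviantBlocks_iff.2 hj)).le) N
  have hNJ : ((N / (K + l) * (K + l) : ℕ) : ℝ) ≤ N := mod_cast Nat.div_mul_le_self N _
  have hKm : (K : ℝ) ≤ (K + l : ℕ) := mod_cast Nat.le_add_right K l
  have hm' : (0 : ℝ) < (K + l : ℕ) := mod_cast hm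
  generalize (Nat.count deviant (N / (K + l))) = a at hblocks ⊢
  generalize N / (K + l) = J at *
  generalize K + l = m at *
  push_cast at hNJ
  refine le_of_mul_le_mul_left ?_ hm'
  calc m * (ε / 8 * J) = m * (ε * J / 4) - m * (ε * J / 8) := by ring
    _ ≤ m * (ε * J / 4) - m * 1 := by gcongr; linarith
    _ = ε * (J * m) - (m + J * (ε * m / 4 + ε / 2 * m)) := by ring
    _ ≤ ε * N - (m + J * (l + ε / 2 * m)) := by gcongr; linarith
    _ ≤ K * a := by linarith
    _ ≤ m * a := by gcongr

theorem dimFSb_lt_one_of_not_isNormal (hb : 2 ≤ b) (hS : ¬ IsNormal S) :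
    dimFSb b (realSeq b S) < 1 := by
  obtain ⟨l, v, ε, hε, hfreq⟩ := exists_frequently_mul_le_abs_sum_of_not_isNormal hS
  obtain ⟨g, hg⟩ := exists_nat_gt (8 / ε)
  rw [div_lt_iff₀' hε] at hg
  have hsize : Tendsto (fun K : ℕ => ε * ((K + l : ℕ) : ℝ)) atTop atTop :=
    (tendsto_natCast_atTop_atTop.comp (tendsto_add_atTop_nat l)).const_mul_atTop hε
  obtain ⟨K, hcard, hl, hgK⟩ := ((eventually_card_deviantBlocks_le v (half_pos hε) g).and
    ((hsize.eventually_ge_atTop (4 * l)).and (eventually_gt_atTop g))).exists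
  rw [Fintype.card_fin] at hcard
  exact dimFSb_lt_one_of_frequently_le_count hb hcard (by omega) (by linarith)
    (frequently_mul_le_count_deviantBlocks hε (by omega) hl hfreq)

end NonNormality

theorem normal_iff_dimFSb_eq_one_general {b : ℕ} (hb : 2 ≤ b) (S : ℕ → Fin b) :
    IsNormal S ↔ dimFSb b (realSeq b S) = 1 :=
  ⟨fun hS => hS.dimFSb_eq_one hb, fun h => by_contra fun hS =>
    (dimFSb_lt_one_of_not_isNormal hb hS).ne h⟩

end

/-- x is b-normal iff dim_FS^b(x) = 1. -/
theorem normal_iff_dimFSb_eq_one (b : ℕ) (hb : 2 ≤ b) (x : ℝ) (hx : x ∈ Set.Ico (0:ℝ) 1)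
    (S : ℕ → Fin b) (hS : realSeq b S = x) (hS' : ¬ endsBm1 b S) :
    (∀ w : List (Fin b), w ≠ [] →
      Filter.Tendsto (fun N : ℕ => (occCount S w N : ℝ) / (N : ℝ)) Filter.atTop
        (nhds (1 / (b:ℝ) ^ w.length)))
    ↔ dimFSb b x = 1 := by
  subst hS
  exact normal_iff_dimFSb_eq_one_general hb S
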